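/- arXiv:1701.04846 — 4 statements merged into one kernel-verified Lean document; each statement's English description precedes it below -/
import Mathlib

section
/- Let n ≥ 1, z ∈ ℝ^n and set z̃ = F_n z with components z̃(0), …, z̃(n−1). Then for every 1 ≤ j ≤ N one has I_{n,λ_j}(z) = (1/(4π))(z̃(2j)² + z̃(2j−1)²); moreover I_{n,λ_0}(z) = (1/(2π)) z̃(0)², and if n is even, I_{n,λ_{n/2}}(z) = (1/(2π)) z̃(n−1)². -/
open MeasureTheory Matrix Filter

/-- The `j`-th Fourier frequency `λ_j = 2πj/n`. -/
noncomputable def fourierFreq (n j : ℕ) : ℝ := 2 * Real.pi * j / n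

/-- The periodogram `I_{n,λ}(z) = (2πn)⁻¹ |∑_{t=1}^n z_t e^{-itλ}|²`. -/
noncomputable def periodogram (n : ℕ) (lam : ℝ) (z : Fin n → ℝ) : ℝ :=
  1 / (2 * Real.pi * n) *
    Complex.normSq (∑ t : Fin n, (z t : ℂ) *
      Complex.exp (-Complex.I * (((t : ℕ) + 1 : ℕ) : ℂ) * (lam : ℂ)))

/-- The real orthogonal Fourier transform matrix `F_n` with rows
`e_0, c_1, s_1, …, c_N, s_N` (and additionally `e_{n/2}` as last row for `n` even). -/
noncomputable def Fmat (n : ℕ) : Matrix (Fin n) (Fin n) ℝ :=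
  Matrix.of fun r t : Fin n =>
    if r.val = 0 then 1 / Real.sqrt n
    else if n % 2 = 0 ∧ r.val = n - 1 then (-1 : ℝ) ^ ((t : ℕ) + 1) / Real.sqrt n
    else if r.val % 2 = 1 then
      Real.sqrt 2 / Real.sqrt n *
        Real.cos (2 * Real.pi * (((r.val + 1) / 2 : ℕ) : ℝ) * (((t : ℕ) + 1 : ℕ) : ℝ) / n)
    else
      -(Real.sqrt 2 / Real.sqrt n) *
        Real.sin (2 * Real.pi * ((r.val / 2 : ℕ) : ℝ) * (((t : ℕ) + 1 : ℕ) : ℝ) / n)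

/-- The diagonal matrix `D_n(f)` with entries `2πf(λ_0), 2πf(λ_1), 2πf(λ_1), …`
matching the row ordering of `F_n`. -/
noncomputable def Dmat (n : ℕ) (f : ℝ → ℝ) : Matrix (Fin n) (Fin n) ℝ :=
  Matrix.diagonal fun r : Fin n => 2 * Real.pi * f (fourierFreq n ((r.val + 1) / 2))

/-- The diagonal correction matrix `C_n(f, f_param)` with entries
`c(λ_0), c(λ_1), c(λ_1), …` where `c = f/f_param`, matching the row ordering of `F_n`. -/
noncomputable def Cmat (n : ℕ) (f fp : ℝ → ℝ) : Matrix (Fin n) (Fin n) ℝ :=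
  Matrix.diagonal fun r : Fin n =>
    f (fourierFreq n ((r.val + 1) / 2)) / fp (fourierFreq n ((r.val + 1) / 2))

/-- Entrywise real power of the diagonal of a matrix: for a diagonal matrix `A` with
positive entries, `diagRPow n A (-(1/2))` is `A^{-1/2}` etc. -/
noncomputable def diagRPow (n : ℕ) (A : Matrix (Fin n) (Fin n) ℝ) (p : ℝ) :
    Matrix (Fin n) (Fin n) ℝ :=
  Matrix.diagonal fun i => A i i ^ p

/-!
The rows of `F_n` are normalised real and imaginary parts of the waves `e^{-itλ_j}`, so for
`1 ≤ j ≤ N` the coordinates `2j - 1` and `2j` of `F_n z` are `√(2/n)` times the real and imaginary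
parts of the Fourier sum of `z` at `λ_j`, and the periodogram is the squared modulus of that sum.
At the frequencies `0` and `π` the Fourier sum is real, so a single coordinate carries all of it;
its row lacks the factor `√2`, which gives `1/(2π)` in place of `1/(4π)`.
-/

section

variable {n : ℕ}

/-- The discrete Fourier sum `∑_{t=1}^n z_t e^{-itλ}` of a real vector at an arbitrary frequency
`λ`, without the normalisation `n^{-1/2}`. As in `periodogram`, the index `t : Fin n` stands for
time `t + 1`. -/
noncomputable def fourierSum (lam : ℝ) (z : Fin n → ℝ) : ℂ :=
  ∑ t : Fin n, (z t : ℂ) * Complex.exp (-Complex.I * (((t : ℕ) + 1 : ℕ) : ℂ) * (lam : ℂ))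

theorem exp_neg_I_mul_natCast_mul (m : ℕ) (x : ℝ) :
    Complex.exp (-Complex.I * (m : ℂ) * (x : ℂ)) = Complex.exp ((-(m * x) : ℝ) * Complex.I) := by
  congr 1
  push_cast
  ring

theorem fourierSum_re (lam : ℝ) (z : Fin n → ℝ) :
    (fourierSum lam z).re = ∑ t : Fin n, z t * Real.cos (((t : ℕ) + 1 : ℕ) * lam) := by
  simp only [fourierSum, exp_neg_I_mul_natCast_mul, Complex.re_sum, Complex.re_ofReal_mul,
    Complex.exp_ofReal_mul_I_re, Real.cos_neg]

theorem fourierSum_im (lam : ℝ) (z : Fin n → ℝ) :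
    (fourierSum lam z).im = -∑ t : Fin n, z t * Real.sin (((t : ℕ) + 1 : ℕ) * lam) := by
  simp only [fourierSum, exp_neg_I_mul_natCast_mul, Complex.im_sum, Complex.im_ofReal_mul,
    Complex.exp_ofReal_mul_I_im, Real.sin_neg, mul_neg, Finset.sum_neg_distrib]

theorem fourierSum_zero_im (z : Fin n → ℝ) : (fourierSum 0 z).im = 0 := by
  simp [fourierSum_im]

theorem fourierSum_pi_im (z : Fin n → ℝ) : (fourierSum Real.pi z).im = 0 := by
  simp only [fourierSum_im, Real.sin_nat_mul_pi, mul_zero, Finset.sum_const_zero, neg_zero]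

theorem periodogram_eq_re_sq_add_im_sq (lam : ℝ) (z : Fin n → ℝ) :
    periodogram n lam z =
      1 / (2 * Real.pi * n) * ((fourierSum lam z).re ^ 2 + (fourierSum lam z).im ^ 2) := by
  rw [periodogram, ← fourierSum, Complex.normSq_apply, sq, sq]

theorem fourierFreq_zero_right (n : ℕ) : fourierFreq n 0 = 0 := by
  simp [fourierFreq]

theorem fourierFreq_half (hn : n ≠ 0) (heven : Even n) :
    fourierFreq n (n / 2) = Real.pi := by
  rw [fourierFreq, Nat.cast_div_charZero heven.two_dvd]
  field_simp
  norm_num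

theorem Fmat_mulVec_zero (hn : 0 < n) (z : Fin n → ℝ) :
    (Fmat n *ᵥ z) ⟨0, hn⟩ = 1 / √n * (fourierSum 0 z).re := by
  simp [Matrix.mulVec, dotProduct, Fmat, fourierSum_re, Finset.mul_sum]

theorem Fmat_mulVec_two_mul_sub_one {j : ℕ} (hj : 1 ≤ j) (hjn : 2 * j < n) (z : Fin n → ℝ) :
    (Fmat n *ᵥ z) ⟨2 * j - 1, by lia⟩ = √2 / √n * (fourierSum (fourierFreq n j) z).re := by
  have row (t : Fin n) : Fmat n ⟨2 * j - 1, by lia⟩ t =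
      √2 / √n * Real.cos (((t : ℕ) + 1 : ℕ) * fourierFreq n j) := by
    rw [Fmat, Matrix.of_apply, if_neg (by lia), if_neg (by lia), if_pos (by lia),
      show (2 * j - 1 + 1) / 2 = j by lia, fourierFreq]
    ring_nf
  rw [Matrix.mulVec, dotProduct, fourierSum_re, Finset.mul_sum]
  exact Finset.sum_congr rfl fun t _ => by rw [row, mul_right_comm, mul_assoc]

theorem Fmat_mulVec_two_mul {j : ℕ} (hj : 1 ≤ j) (hjn : 2 * j < n) (z : Fin n → ℝ) :
    (Fmat n *ᵥ z) ⟨2 * j, hjn⟩ = √2 / √n * (fourierSum (fourierFreq n j) z).im := by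
  have row (t : Fin n) : Fmat n ⟨2 * j, hjn⟩ t =
      -(√2 / √n) * Real.sin (((t : ℕ) + 1 : ℕ) * fourierFreq n j) := by
    rw [Fmat, Matrix.of_apply, if_neg (by lia), if_neg (by lia), if_neg (by lia),
      show 2 * j / 2 = j by lia, fourierFreq]
    ring_nf
  rw [Matrix.mulVec, dotProduct, fourierSum_im, mul_neg, ← neg_mul, Finset.mul_sum]
  exact Finset.sum_congr rfl fun t _ => by rw [row, mul_right_comm, mul_assoc]

theorem Fmat_mulVec_last_of_even (hn : 0 < n) (heven : Even n) (z : Fin n → ℝ) :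
    (Fmat n *ᵥ z) ⟨n - 1, Nat.sub_one_lt_of_lt hn⟩ = 1 / √n * (fourierSum Real.pi z).re := by
  have row (t : Fin n) : Fmat n ⟨n - 1, Nat.sub_one_lt_of_lt hn⟩ t =
      1 / √n * Real.cos (((t : ℕ) + 1 : ℕ) * Real.pi) := by
    have hmod : n % 2 = 0 := Nat.even_iff.mp heven
    rw [Fmat, Matrix.of_apply, if_neg (by lia), if_pos ⟨hmod, rfl⟩, Real.cos_nat_mul_pi,
      div_eq_inv_mul, one_div]
  rw [Matrix.mulVec, dotProduct, fourierSum_re, Finset.mul_sum]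
  exact Finset.sum_congr rfl fun t _ => by rw [row, mul_right_comm, mul_assoc]

end

/-- relation between the periodogram and the components of `z̃ = F_n z`. -/
theorem statement0 (n : ℕ) (hn : 1 ≤ n) (z : Fin n → ℝ) :
    (∀ j : ℕ, (_hj1 : 1 ≤ j) → (_hj2 : j ≤ (n - 1) / 2) →
      periodogram n (fourierFreq n j) z =
        1 / (4 * Real.pi) *
          (((Fmat n).mulVec z ⟨2 * j, by omega⟩) ^ 2 +
           ((Fmat n).mulVec z ⟨2 * j - 1, by omega⟩) ^ 2)) ∧
    periodogram n (fourierFreq n 0) z =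
      1 / (2 * Real.pi) * ((Fmat n).mulVec z ⟨0, by omega⟩) ^ 2 ∧
    (n % 2 = 0 →
      periodogram n (fourierFreq n (n / 2)) z =
        1 / (2 * Real.pi) * ((Fmat n).mulVec z ⟨n - 1, by omega⟩) ^ 2) := by
  have hn₀ : (n : ℝ) ≠ 0 := by positivity
  refine ⟨fun j hj1 hj2 => ?_, ?_, fun hmod => ?_⟩
  · have hjn : 2 * j < n := by lia
    rw [periodogram_eq_re_sq_add_im_sq, Fmat_mulVec_two_mul hj1 hjn,
      Fmat_mulVec_two_mul_sub_one hj1 hjn, mul_pow, mul_pow, div_pow, Real.sq_sqrt n.cast_nonneg,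
      Real.sq_sqrt zero_le_two]
    field
  · rw [periodogram_eq_re_sq_add_im_sq, Fmat_mulVec_zero hn, fourierFreq_zero_right,
      fourierSum_zero_im, mul_pow, div_pow, Real.sq_sqrt n.cast_nonneg]
    field
  · have heven : Even n := Nat.even_iff.mpr hmod
    rw [periodogram_eq_re_sq_add_im_sq, Fmat_mulVec_last_of_even hn heven,
      fourierFreq_half (by lia) heven, fourierSum_pi_im, mul_pow, div_pow,
      Real.sq_sqrt n.cast_nonneg]
    field
end

section
/- Let n ≥ 1, f : [0,2π] → (0,∞), and σ > 0, and set C := σ^{−2} D_n(f) (the nonparametric correction matrix of the i.i.d. N(0,σ²) working model whose spectral density is σ²/(2π)). Then for every z ∈ ℝ^n, det(C)^{−1/2} (2πσ²)^{−n/2} exp(−‖F_n^T C^{−1/2} F_n z‖² / (2σ²)) = (2π)^{−n/2} det(D_n(f))^{−1/2} exp(−(1/2)(F_n z)^T D_n(f)^{−1}(F_n z)). In particular, the nonparametrically corrected likelihood of the i.i.d. N(0,σ²) working model does not depend on σ and equals the Whittle likelihood. -/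
/-!
Conjugating by an orthogonal matrix does not change squared norms, so with `y = F z` the corrected
quadratic form is `‖C^{-1/2} y‖² = yᵀ C⁻¹ y = σ² yᵀ D⁻¹ y`, and the factor `σ²` cancels against the
`2σ²` of the Gaussian density. The same scaling in the determinant,
`det C ^ (-1/2) = σ^n (det D)^(-1/2)`, absorbs the normalising constant `σ^{-n}`.

For the orthogonality of `F_n`, every entry is written as an amplitude times a phase-shifted cosine.
Inner products of rows then become sums of cosines over `n` equispaced points, which vanish unless
`n` divides the frequency index.
-/

open MeasureTheory Matrix Filter

open Finset in
theorem geom_sum_zpow_of_isPrimitiveRoot {K : Type*} [Field K] {ζ : K} {n : ℕ}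
    (hζ : IsPrimitiveRoot ζ n) (m : ℤ) :
    ∑ t ∈ range n, (ζ ^ m) ^ t = if (n : ℤ) ∣ m then (n : K) else 0 := by
  split_ifs with hm
  · simp [(hζ.zpow_eq_one_iff_dvd m).2 hm]
  · have hne : ζ ^ m ≠ 1 := mt (hζ.zpow_eq_one_iff_dvd m).1 hm
    have hpow : (ζ ^ m) ^ n = 1 := by
      rw [← _root_.zpow_natCast, zpow_comm, _root_.zpow_natCast, hζ.pow_eq_one, _root_.one_zpow]
    rw [geom_sum_eq hne, hpow, sub_self, zero_div]

section EquispacedCosines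

open Real Finset

theorem sum_cos_equispaced (n a : ℕ) (m : ℤ) (φ : ℝ) :
    ∑ t ∈ range n, cos (2 * π * m * ((t + a : ℕ) : ℝ) / n + φ) =
      if (n : ℤ) ∣ m then n * cos φ else 0 := by
  rcases eq_or_ne n 0 with rfl | hn
  · simp
  have hζ := Complex.isPrimitiveRoot_exp n hn
  set ζ : ℂ := Complex.exp (2 * π * Complex.I / n) with hζ_def
  have cos_eq_re (t : ℕ) : cos (2 * π * m * ((t + a : ℕ) : ℝ) / n + φ) =
      (Complex.exp (φ * Complex.I) * (ζ ^ m) ^ a * (ζ ^ m) ^ t).re := by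
    rw [mul_assoc (Complex.exp _), ← pow_add, hζ_def, ← Complex.exp_int_mul, ← Complex.exp_nat_mul,
      ← Complex.exp_add, ← Complex.exp_ofReal_mul_I_re]
    congr 2
    push_cast
    ring
  simp only [cos_eq_re]
  rw [← Complex.re_sum, ← mul_sum, geom_sum_zpow_of_isPrimitiveRoot hζ]
  split_ifs with hm
  · rw [(hζ.zpow_eq_one_iff_dvd m).2 hm, one_pow, mul_one, mul_comm, ← Complex.ofReal_natCast,
      Complex.re_ofReal_mul, Complex.exp_ofReal_mul_I_re]
  · rw [mul_zero, Complex.zero_re]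

theorem sum_cos_mul_cos_equispaced (n a : ℕ) (k l : ℤ) (φ ψ : ℝ) :
    ∑ t ∈ range n, cos (2 * π * k * ((t + a : ℕ) : ℝ) / n + φ) *
        cos (2 * π * l * ((t + a : ℕ) : ℝ) / n + ψ) =
      n / 2 * ((if (n : ℤ) ∣ k - l then cos (φ - ψ) else 0) +
        if (n : ℤ) ∣ k + l then cos (φ + ψ) else 0) := by
  have product_to_sum (t : ℕ) : cos (2 * π * k * ((t + a : ℕ) : ℝ) / n + φ) *
        cos (2 * π * l * ((t + a : ℕ) : ℝ) / n + ψ) =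
      (cos (2 * π * (k - l : ℤ) * ((t + a : ℕ) : ℝ) / n + (φ - ψ)) +
        cos (2 * π * (k + l : ℤ) * ((t + a : ℕ) : ℝ) / n + (φ + ψ))) / 2 := by
    rw [eq_div_iff two_ne_zero, mul_comm, ← mul_assoc, two_mul_cos_mul_cos]
    push_cast
    ring_nf
  simp only [product_to_sum]
  rw [← sum_div, sum_add_distrib, sum_cos_equispaced, sum_cos_equispaced]
  split_ifs <;> ring

end EquispacedCosines

namespace Fmat

/-- The index `j` of the Fourier frequency `λ_j` attached to row `r` of `F_n`. -/
def freqIndex (r : ℕ) : ℕ := (r + 1) / 2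

/-- The amplitude of row `r` of `F_n`, written as a cosine wave. The condition `n ∣ 2 j` singles out
the real Fourier vectors `e_0` and `e_{n/2}`, which are not multiplied by `√2`. -/
noncomputable def amplitude (n r : ℕ) : ℝ :=
  if n ∣ 2 * freqIndex r then 1 / √n else √2 / √n

/-- The phase of row `r` of `F_n`, written as a cosine wave: a quarter period for the sine rows,
which have positive even index. -/
noncomputable def phase (r : ℕ) : ℝ :=
  if r = 0 ∨ r % 2 = 1 then 0 else Real.pi / 2

theorem freqIndex_lt {n r : ℕ} (hr : r < n) : freqIndex r < n := by
  unfold freqIndex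
  lia

theorem dvd_freqIndex_add_iff {n r s : ℕ} (hr : r < n) (hs : s < n) :
    n ∣ freqIndex r + freqIndex s ↔
      freqIndex r + freqIndex s = 0 ∨ freqIndex r + freqIndex s = n := by
  constructor
  · intro hdvd
    have hle : freqIndex r + freqIndex s ≤ n := by
      unfold freqIndex
      lia
    exact (Nat.eq_zero_or_pos _).imp_right fun hpos => hle.antisymm (Nat.le_of_dvd hpos hdvd)
  · rintro (h | h) <;> simp [h]

theorem dvd_two_mul_freqIndex_iff {n r : ℕ} (hr : r < n) :
    n ∣ 2 * freqIndex r ↔ r = 0 ∨ n % 2 = 0 ∧ r = n - 1 := by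
  rw [two_mul, dvd_freqIndex_add_iff hr hr, freqIndex]
  lia

theorem dvd_freqIndex_sub_iff {n r s : ℕ} (hr : r < n) (hs : s < n) :
    (n : ℤ) ∣ (freqIndex r : ℤ) - freqIndex s ↔ freqIndex r = freqIndex s := by
  rw [← Nat.modEq_iff_dvd]
  exact ⟨fun h => (h.eq_of_lt_of_lt (freqIndex_lt hs) (freqIndex_lt hr)).symm, fun h => h ▸ rfl⟩

theorem apply_eq_amplitude_mul_cos {n : ℕ} (r t : Fin n) :
    Fmat n r t = amplitude n r * Real.cos
      (2 * Real.pi * freqIndex r * (((t : ℕ) + 1 : ℕ) : ℝ) / n + phase r) := by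
  have hn : (n : ℝ) ≠ 0 := Nat.cast_ne_zero.2 r.pos.ne'
  simp only [Fmat, Matrix.of_apply, amplitude, phase, dvd_two_mul_freqIndex_iff r.isLt]
  by_cases hzero : r.val = 0
  · simp [hzero, freqIndex]
  by_cases hlast : n % 2 = 0 ∧ r.val = n - 1
  · have hodd : r.val % 2 = 1 := by lia
    have hfreq : (n : ℝ) = 2 * freqIndex r := by
      exact_mod_cast (by unfold freqIndex; lia : n = 2 * freqIndex r)
    have hangle : 2 * Real.pi * freqIndex r * (((t : ℕ) + 1 : ℕ) : ℝ) / n =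
        ((t : ℕ) + 1 : ℕ) * Real.pi := by
      rw [div_eq_iff hn, hfreq]
      ring
    rw [if_neg hzero, if_pos hlast, if_pos (Or.inr hlast), if_pos (Or.inr hodd), add_zero, hangle,
      Real.cos_nat_mul_pi]
    ring
  · rw [if_neg hzero, if_neg hlast, if_neg (not_or.2 ⟨hzero, hlast⟩)]
    by_cases hodd : r.val % 2 = 1
    · simp [hodd, freqIndex]
    · have hfreq : freqIndex r = r.val / 2 := by
        unfold freqIndex
        lia
      rw [if_neg hodd, if_neg (not_or.2 ⟨hzero, hodd⟩), Real.cos_add_pi_div_two, hfreq]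
      ring

theorem mul_transpose_apply {n : ℕ} (r s : Fin n) :
    (Fmat n * (Fmat n)ᵀ) r s = amplitude n r * amplitude n s * (n / 2 *
      ((if freqIndex r = freqIndex s then Real.cos (phase r - phase s) else 0) +
        if n ∣ freqIndex r + freqIndex s then Real.cos (phase r + phase s) else 0)) := by
  have hsum := sum_cos_mul_cos_equispaced n 1 (freqIndex r) (freqIndex s) (phase r) (phase s)
  simp only [Finset.sum_range, Int.cast_natCast, dvd_freqIndex_sub_iff r.isLt s.isLt] at hsum
  norm_cast at hsum
  simp only [Matrix.mul_apply, Matrix.transpose_apply, apply_eq_amplitude_mul_cos]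
  rw [← hsum, Finset.mul_sum]
  exact Finset.sum_congr rfl fun t _ => mul_mul_mul_comm _ _ _ _

theorem mul_transpose_apply_self {n : ℕ} (r : Fin n) : (Fmat n * (Fmat n)ᵀ) r r = 1 := by
  have hn : (0 : ℝ) < n := Nat.cast_pos.2 r.pos
  rw [mul_transpose_apply, if_pos rfl, sub_self, Real.cos_zero, ← two_mul, amplitude]
  split_ifs with hreal
  · have hphase : phase r = 0 := by
      rw [dvd_two_mul_freqIndex_iff r.isLt] at hreal
      exact if_pos (by lia)
    rw [hphase, add_zero, Real.cos_zero, div_mul_div_comm, Real.mul_self_sqrt hn.le]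
    field_simp
    norm_num
  · rw [div_mul_div_comm, Real.mul_self_sqrt hn.le, Real.mul_self_sqrt zero_le_two]
    field_simp
    norm_num

theorem cos_phase_sub_eq_zero {r s : ℕ} (hrs : r ≠ s) (hfreq : freqIndex r = freqIndex s) :
    Real.cos (phase r - phase s) = 0 := by
  unfold freqIndex at hfreq
  unfold phase
  by_cases hodd : r % 2 = 1
  · rw [if_pos (by lia), if_neg (by lia), zero_sub, Real.cos_neg, Real.cos_pi_div_two]
  · rw [if_neg (by lia), if_pos (by lia), sub_zero, Real.cos_pi_div_two]

theorem mul_transpose_apply_of_ne {n : ℕ} {r s : Fin n} (hrs : r ≠ s) :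
    (Fmat n * (Fmat n)ᵀ) r s = 0 := by
  have hrs' : r.val ≠ s.val := Fin.val_ne_of_ne hrs
  have hndvd : ¬ n ∣ freqIndex r + freqIndex s := by
    rw [dvd_freqIndex_add_iff r.isLt s.isLt]
    unfold freqIndex
    lia
  rw [mul_transpose_apply, if_neg hndvd, add_zero]
  split_ifs with hfreq
  · rw [cos_phase_sub_eq_zero hrs' hfreq, mul_zero, mul_zero]
  · rw [mul_zero, mul_zero]

theorem mem_orthogonalGroup (n : ℕ) : Fmat n ∈ Matrix.orthogonalGroup (Fin n) ℝ := by
  rw [Matrix.mem_orthogonalGroup_iff]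
  ext r s
  rcases eq_or_ne r s with rfl | hrs
  · rw [Matrix.one_apply_eq]
    exact mul_transpose_apply_self r
  · rw [Matrix.one_apply_ne hrs]
    exact mul_transpose_apply_of_ne hrs

end Fmat

theorem fourierFreq_mem_Icc {n j : ℕ} (hj : j ≤ n) :
    fourierFreq n j ∈ Set.Icc 0 (2 * Real.pi) := by
  unfold fourierFreq
  refine ⟨by positivity, div_le_of_le_mul₀ (by positivity) (by positivity) ?_⟩
  gcongr

section CorrectedGaussian

variable {ι : Type*} [Fintype ι] [DecidableEq ι]

theorem det_inv_smul_rpow_mul_rpow {D : Matrix ι ι ℝ} (hD : 0 ≤ D.det) {a c : ℝ} (ha : 0 ≤ a)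
    (hc : 0 < c) :
    (c⁻¹ • D).det ^ (-(1 : ℝ) / 2) * (a * c) ^ (-(Fintype.card ι : ℝ) / 2) =
      a ^ (-(Fintype.card ι : ℝ) / 2) * D.det ^ (-(1 : ℝ) / 2) := by
  have hscale : (c⁻¹ ^ Fintype.card ι) ^ (-(1 : ℝ) / 2) =
      (c ^ (-(Fintype.card ι : ℝ) / 2))⁻¹ := by
    rw [← Real.rpow_natCast, ← Real.rpow_mul (by positivity), Real.inv_rpow hc.le]
    ring_nf
  rw [Matrix.det_smul, Real.mul_rpow (by positivity) hD, Real.mul_rpow ha hc.le, hscale]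
  field_simp

theorem dotProduct_self_orthogonal_conj_mulVec {R : Type*} [CommRing R] {F : Matrix ι ι R}
    (hF : F ∈ Matrix.orthogonalGroup ι R) (A : Matrix ι ι R) (z : ι → R) :
    ((Fᵀ * A * F) *ᵥ z) ⬝ᵥ ((Fᵀ * A * F) *ᵥ z) = (A *ᵥ (F *ᵥ z)) ⬝ᵥ (A *ᵥ (F *ᵥ z)) := by
  have hFFt : F * Fᵀ = 1 := (Matrix.mem_orthogonalGroup_iff ι R).1 hF
  rw [← Matrix.mulVec_mulVec, ← Matrix.mulVec_mulVec, Matrix.dotProduct_mulVec,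
    Matrix.vecMul_transpose, Matrix.mulVec_mulVec, hFFt, Matrix.one_mulVec]

theorem inv_diagonal_of_ne_zero {K : Type*} [Field K] {d : ι → K} (hd : ∀ i, d i ≠ 0) :
    (diagonal d)⁻¹ = diagonal d⁻¹ := by
  refine Matrix.inv_eq_left_inv ?_
  simp [Matrix.diagonal_mul_diagonal, hd]

theorem dotProduct_self_diagonal_rpow_neg_half_mulVec {d : ι → ℝ} (hd : ∀ i, 0 < d i)
    (y : ι → ℝ) :
    (diagonal (fun i => d i ^ (-(1 / 2) : ℝ)) *ᵥ y) ⬝ᵥ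
        (diagonal (fun i => d i ^ (-(1 / 2) : ℝ)) *ᵥ y) = y ⬝ᵥ ((diagonal d)⁻¹ *ᵥ y) := by
  rw [inv_diagonal_of_ne_zero fun i => (hd i).ne']
  simp only [dotProduct, Matrix.mulVec_diagonal]
  refine Finset.sum_congr rfl fun i _ => ?_
  have hsq : d i ^ (-(1 / 2) : ℝ) * d i ^ (-(1 / 2) : ℝ) = (d i)⁻¹ := by
    rw [← Real.rpow_add (hd i), ← Real.rpow_neg_one]
    norm_num
  rw [mul_mul_mul_comm, hsq, Pi.inv_apply]
  ring

theorem statement3_general {F : Matrix ι ι ℝ} (hF : F ∈ Matrix.orthogonalGroup ι ℝ)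
    {d : ι → ℝ} (hd : ∀ i, 0 < d i) {σ : ℝ} (hσ : σ ≠ 0) (z : ι → ℝ) :
    let C : Matrix ι ι ℝ := (σ ^ 2)⁻¹ • diagonal d
    let v : ι → ℝ := (Fᵀ * diagonal (fun i => C i i ^ (-(1 / 2) : ℝ)) * F) *ᵥ z
    C.det ^ (-(1 : ℝ) / 2) * (2 * Real.pi * σ ^ 2) ^ (-(Fintype.card ι : ℝ) / 2) *
        Real.exp (-(v ⬝ᵥ v) / (2 * σ ^ 2)) =
      (2 * Real.pi) ^ (-(Fintype.card ι : ℝ) / 2) * (diagonal d).det ^ (-(1 : ℝ) / 2) *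
        Real.exp (-(1 / 2) * ((F *ᵥ z) ⬝ᵥ ((diagonal d)⁻¹ *ᵥ (F *ᵥ z)))) := by
  intro C v
  have hσ2 : 0 < σ ^ 2 := by positivity
  have hdet : 0 < (diagonal d).det := by
    rw [Matrix.det_diagonal]
    exact Finset.prod_pos fun i _ => hd i
  have hC : C = diagonal fun i => C i i := by
    ext i j
    rcases eq_or_ne i j with rfl | hij <;> simp [C, *]
  have hCpos (i : ι) : 0 < C i i := by
    simpa [C] using mul_pos (inv_pos.2 hσ2) (hd i)
  have hCinv : C⁻¹ = σ ^ 2 • (diagonal d)⁻¹ := by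
    refine Matrix.inv_eq_left_inv ?_
    rw [smul_mul_smul_comm, mul_inv_cancel₀ hσ2.ne', one_smul,
      Matrix.nonsing_inv_mul _ hdet.ne'.isUnit]
  have hquad : v ⬝ᵥ v = σ ^ 2 * ((F *ᵥ z) ⬝ᵥ ((diagonal d)⁻¹ *ᵥ (F *ᵥ z))) := by
    rw [dotProduct_self_orthogonal_conj_mulVec hF,
      dotProduct_self_diagonal_rpow_neg_half_mulVec hCpos, ← hC, hCinv, Matrix.smul_mulVec,
      dotProduct_smul, smul_eq_mul]
  rw [det_inv_smul_rpow_mul_rpow hdet.le (by positivity) hσ2, hquad]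
  congr 2
  field_simp

end CorrectedGaussian

/-- the nonparametrically corrected likelihood of the i.i.d. `N(0,σ²)`
working model does not depend on `σ` and equals the Whittle likelihood. -/
theorem statement3 (n : ℕ) (hn : 1 ≤ n) (f : ℝ → ℝ)
    (hf : ∀ x ∈ Set.Icc 0 (2 * Real.pi), 0 < f x)
    (σ : ℝ) (hσ : 0 < σ) (z : Fin n → ℝ) :
    let C : Matrix (Fin n) (Fin n) ℝ := (σ ^ 2)⁻¹ • Dmat n f
    let v : Fin n → ℝ := ((Fmat n)ᵀ * diagRPow n C (-(1 / 2)) * Fmat n).mulVec z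
    C.det ^ (-(1 : ℝ) / 2) * (2 * Real.pi * σ ^ 2) ^ (-(n : ℝ) / 2) *
        Real.exp (-(v ⬝ᵥ v) / (2 * σ ^ 2)) =
      (2 * Real.pi) ^ (-(n : ℝ) / 2) * (Dmat n f).det ^ (-(1 : ℝ) / 2) *
        Real.exp (-(1 / 2) *
          ((Fmat n).mulVec z ⬝ᵥ ((Dmat n f)⁻¹).mulVec ((Fmat n).mulVec z))) := by
  have hd (r : Fin n) : 0 < 2 * Real.pi * f (fourierFreq n ((r.val + 1) / 2)) :=
    mul_pos Real.two_pi_pos (hf _ (fourierFreq_mem_Icc (Fmat.freqIndex_lt r.isLt).le))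
  simpa only [Dmat, diagRPow, Fintype.card_fin] using
    statement3_general (Fmat.mem_orthogonalGroup n) hd hσ.ne' z
end

section
/- Let γ : ℤ → ℝ satisfy γ(−h) = γ(h) for all h and Σ_{h∈ℤ} |γ(h)| < ∞, and define the spectral density f(λ) = (1/(2π)) Σ_{h∈ℤ} γ(h) e^{−ihλ} for λ ∈ ℝ (which is real-valued). Then sup_{λ∈ℝ} | (1/(2πn)) Σ_{s=1}^n Σ_{t=1}^n γ(s−t) e^{−i(s−t)λ} − f(λ) | → 0 as n → ∞; equivalently, sup_{λ∈ℝ} | (1/(2π)) Σ_{|h|≤n−1} (1 − |h|/n) γ(h) e^{−ihλ} − f(λ) | → 0. (This is the uniform asymptotic unbiasedness of the mean of the periodogram of a zero-mean stationary process with absolutely summable autocovariance function γ.) -/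
open MeasureTheory Filter

/-!
Grouping the pairs `(s, t)` by their difference turns the mean periodogram into the Fourier series
of `γ` damped by the Fejér weights `(1 - |h| / n)₊`. The distance to the spectral density is
therefore at most `(2π)⁻¹ ∑ h, (1 - (1 - |h| / n)₊) ‖γ h‖`, a bound free of `λ` because the phases
are unimodular; it tends to zero by dominated convergence.
-/

section Counting

open Finset

theorem card_filter_sub_eq (n : ℕ) (h : ℤ) :
    #{p ∈ Icc (1 : ℤ) n ×ˢ Icc (1 : ℤ) n | p.1 - p.2 = h} = n - h.natAbs := by
  have card_eq : #{p ∈ Icc (1 : ℤ) n ×ˢ Icc (1 : ℤ) n | p.1 - p.2 = h} =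
      #(Icc (max 1 (1 + h)) (min n (n + h))) := by
    refine card_nbij' Prod.fst (fun s ↦ (s, s - h)) ?_ ?_ ?_ ?_
    · simp only [Set.MapsTo, mem_coe, mem_filter, mem_product, mem_Icc]
      omega
    · simp only [Set.MapsTo, mem_coe, mem_filter, mem_product, mem_Icc]
      omega
    · rintro ⟨s, t⟩ hst
      simp only [mem_coe, mem_filter] at hst
      simp only [← hst.2, sub_sub_cancel]
    · exact fun _ _ ↦ rfl
  rw [card_eq, Int.card_Icc]
  omega

theorem sum_sum_sub_eq_sum_nsmul {M : Type*} [AddCommMonoid M] (f : ℤ → M) (n : ℕ) :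
    ∑ s ∈ Icc (1 : ℤ) n, ∑ t ∈ Icc (1 : ℤ) n, f (s - t) =
      ∑ h ∈ Ioo (-n : ℤ) n, (n - h.natAbs) • f h := by
  have maps_to : ∀ p ∈ Icc (1 : ℤ) n ×ˢ Icc (1 : ℤ) n, p.1 - p.2 ∈ Ioo (-n : ℤ) n := by
    simp only [mem_product, mem_Icc, mem_Ioo]
    omega
  rw [← sum_product', ← sum_fiberwise_of_maps_to' maps_to f]
  simp only [sum_const, card_filter_sub_eq]

end Counting

/-- The Fejér weight `(1 - |h| / n)₊`, with which lag `h` enters the Cesàro mean of order `n`.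
Truncated subtraction takes the positive part, and all weights of order `n = 0` vanish. -/
noncomputable def fejerWeight (n : ℕ) (h : ℤ) : ℝ := (n - h.natAbs : ℕ) / n

theorem fejerWeight_nonneg (n : ℕ) (h : ℤ) : 0 ≤ fejerWeight n h := by
  unfold fejerWeight
  positivity

theorem fejerWeight_le_one (n : ℕ) (h : ℤ) : fejerWeight n h ≤ 1 :=
  div_le_one_of_le₀ (by exact_mod_cast n.sub_le h.natAbs) n.cast_nonneg

theorem tendsto_fejerWeight (h : ℤ) : Tendsto (fejerWeight · h) atTop (nhds 1) := by
  have lim : Tendsto (fun n : ℕ ↦ 1 - (h.natAbs : ℝ) / n) atTop (nhds 1) := by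
    simpa using (tendsto_const_div_atTop_nhds_zero_nat (h.natAbs : ℝ)).const_sub 1
  refine lim.congr' ?_
  filter_upwards [eventually_ge_atTop h.natAbs, eventually_ne_atTop 0] with n hn hn0
  rw [fejerWeight, Nat.cast_sub hn, sub_div, div_self (Nat.cast_ne_zero.mpr hn0)]

theorem summable_one_sub_fejerWeight_mul {b : ℤ → ℝ} (hb : Summable b) (hb0 : ∀ h, 0 ≤ b h)
    (n : ℕ) : Summable fun h ↦ (1 - fejerWeight n h) * b h :=
  hb.of_nonneg_of_le
    (fun h ↦ mul_nonneg (sub_nonneg.mpr (fejerWeight_le_one n h)) (hb0 h))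
    (fun h ↦ mul_le_of_le_one_left (hb0 h) (sub_le_self 1 (fejerWeight_nonneg n h)))

theorem tendsto_tsum_one_sub_fejerWeight_mul {b : ℤ → ℝ} (hb : Summable b) :
    Tendsto (fun n ↦ ∑' h, (1 - fejerWeight n h) * b h) atTop (nhds 0) := by
  have pointwise (h : ℤ) :
      Tendsto (fun n ↦ (1 - fejerWeight n h) * b h) atTop (nhds 0) := by
    simpa using ((tendsto_fejerWeight h).const_sub 1).mul_const (b h)
  have dominated (n : ℕ) (h : ℤ) : ‖(1 - fejerWeight n h) * b h‖ ≤ ‖b h‖ := by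
    rw [norm_mul, Real.norm_of_nonneg (sub_nonneg.mpr (fejerWeight_le_one n h))]
    exact mul_le_of_le_one_left (norm_nonneg _) (sub_le_self 1 (fejerWeight_nonneg n h))
  simpa using tendsto_tsum_of_dominated_convergence hb.norm pointwise (.of_forall dominated)

theorem inv_smul_sum_sum_sub_eq_tsum_fejerWeight {V : Type*} [AddCommGroup V] [Module ℝ V]
    [TopologicalSpace V] (f : ℤ → V) (n : ℕ) :
    (n : ℝ)⁻¹ • ∑ s ∈ Finset.Icc (1 : ℤ) n, ∑ t ∈ Finset.Icc (1 : ℤ) n, f (s - t) =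
      ∑' h, fejerWeight n h • f h := by
  have vanish : ∀ h ∉ Finset.Ioo (-n : ℤ) n, fejerWeight n h • f h = 0 := by
    intro h hh
    have count_eq_zero : n - h.natAbs = 0 := by
      rw [Finset.mem_Ioo] at hh
      omega
    simp only [fejerWeight, count_eq_zero, Nat.cast_zero, zero_div, zero_smul]
  rw [tsum_eq_sum vanish, sum_sum_sub_eq_sum_nsmul, Finset.smul_sum]
  refine Finset.sum_congr rfl fun h _ ↦ ?_
  rw [← Nat.cast_smul_eq_nsmul ℝ, smul_smul, fejerWeight, div_eq_inv_mul]

theorem norm_tsum_sub_tsum_fejerWeight_smul_le {E : Type*} [NormedAddCommGroup E]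
    [NormedSpace ℝ E] [CompleteSpace E] {f : ℤ → E} {b : ℤ → ℝ} (hb : Summable b)
    (hfb : ∀ h, ‖f h‖ ≤ b h) (n : ℕ) :
    ‖∑' h, f h - ∑' h, fejerWeight n h • f h‖ ≤ ∑' h, (1 - fejerWeight n h) * b h := by
  have hb0 (h : ℤ) : 0 ≤ b h := (norm_nonneg _).trans (hfb h)
  have summable_weighted : Summable fun h ↦ fejerWeight n h • f h := by
    refine hb.of_norm_bounded fun h ↦ ?_
    rw [norm_smul_of_nonneg (fejerWeight_nonneg n h)]
    exact (mul_le_of_le_one_left (norm_nonneg _) (fejerWeight_le_one n h)).trans (hfb h)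
  rw [← (hb.of_norm_bounded hfb).tsum_sub summable_weighted]
  refine tsum_of_norm_bounded (summable_one_sub_fejerWeight_mul hb hb0 n).hasSum fun h ↦ ?_
  have one_sub_nonneg := sub_nonneg.mpr (fejerWeight_le_one n h)
  calc ‖f h - fejerWeight n h • f h‖ = (1 - fejerWeight n h) * ‖f h‖ := by
        rw [← norm_smul_of_nonneg one_sub_nonneg, sub_smul, one_smul]
    _ ≤ (1 - fejerWeight n h) * b h := mul_le_mul_of_nonneg_left (hfb h) one_sub_nonneg

theorem tendstoUniformly_inv_smul_sum_sum_sub {ι E : Type*} [NormedAddCommGroup E]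
    [NormedSpace ℝ E] [CompleteSpace E] {f : ι → ℤ → E} {b : ℤ → ℝ} (hb : Summable b)
    (hfb : ∀ i h, ‖f i h‖ ≤ b h) :
    TendstoUniformly
      (fun (n : ℕ) i ↦
        (n : ℝ)⁻¹ • ∑ s ∈ Finset.Icc (1 : ℤ) n, ∑ t ∈ Finset.Icc (1 : ℤ) n, f i (s - t))
      (fun i ↦ ∑' h, f i h) atTop := by
  rw [Metric.tendstoUniformly_iff]
  intro ε hε
  filter_upwards [(tendsto_tsum_one_sub_fejerWeight_mul hb).eventually_lt_const hε] with n hn i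
  rw [dist_eq_norm, inv_smul_sum_sum_sub_eq_tsum_fejerWeight]
  exact (norm_tsum_sub_tsum_fejerWeight_smul_le hb (hfb i) n).trans_lt hn

theorem tendsto_iSup_norm_sub_of_tendstoUniformly {ι α E : Type*} [SeminormedAddCommGroup E]
    {F : ι → α → E} {f : α → E} {l : Filter ι} (hF : TendstoUniformly F f l) :
    Tendsto (fun i ↦ ⨆ x, ‖F i x - f x‖) l (nhds 0) := by
  rw [Metric.tendsto_nhds]
  intro ε hε
  filter_upwards [Metric.tendstoUniformly_iff.mp hF (ε / 2) (half_pos hε)] with i hi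
  have iSup_le : ⨆ x, ‖F i x - f x‖ ≤ ε / 2 :=
    Real.iSup_le (fun x ↦ by simpa only [dist_eq_norm'] using (hi x).le) (half_pos hε).le
  rw [Real.dist_0_eq_abs, abs_of_nonneg (Real.iSup_nonneg fun _ ↦ norm_nonneg _)]
  exact iSup_le.trans_lt (half_lt_self hε)

section Spectral

variable {E : Type*} [NormedAddCommGroup E] [NormedSpace ℂ E]

/-- The mean at frequency `lam` of the periodogram of `n` consecutive observations of a zero-mean
process with autocovariance `γ`. Values in a normed space allow for vector-valued processes, whose
autocovariances are matrices or operators. -/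
noncomputable def meanPeriodogram (γ : ℤ → E) (n : ℕ) (lam : ℝ) : E :=
  (1 / (2 * Real.pi * n) : ℂ) • ∑ s ∈ Finset.Icc (1 : ℤ) n, ∑ t ∈ Finset.Icc (1 : ℤ) n,
    Complex.exp (-Complex.I * ((s - t : ℤ) : ℂ) * (lam : ℂ)) • γ (s - t)

/-- The spectral density at frequency `lam` of a process with autocovariance `γ`; the value is
meaningful only when the Fourier series converges, being `0` otherwise. -/
noncomputable def spectralDensity (γ : ℤ → E) (lam : ℝ) : E :=
  (1 / (2 * Real.pi) : ℂ) •
    ∑' h : ℤ, Complex.exp (-Complex.I * (h : ℂ) * (lam : ℂ)) • γ h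

theorem meanPeriodogram_eq_smul_inv_smul (γ : ℤ → E) (n : ℕ) (lam : ℝ) :
    meanPeriodogram γ n lam = (1 / (2 * Real.pi) : ℂ) • (n : ℝ)⁻¹ •
      ∑ s ∈ Finset.Icc (1 : ℤ) n, ∑ t ∈ Finset.Icc (1 : ℤ) n,
        Complex.exp (-Complex.I * ((s - t : ℤ) : ℂ) * (lam : ℂ)) • γ (s - t) := by
  rw [meanPeriodogram, ← Complex.coe_smul, smul_smul, Complex.ofReal_inv, Complex.ofReal_natCast,
    ← div_eq_mul_inv, div_div]

theorem norm_exp_neg_I_mul_intCast_mul_ofReal (h : ℤ) (lam : ℝ) :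
    ‖Complex.exp (-Complex.I * (h : ℂ) * (lam : ℂ))‖ = 1 := by
  simp [Complex.norm_exp]

theorem statement9_general [CompleteSpace E] (γ : ℤ → E) (hsum : Summable fun h ↦ ‖γ h‖) :
    TendstoUniformly (meanPeriodogram γ) (spectralDensity γ) atTop := by
  have norm_term_le (lam : ℝ) (h : ℤ) :
      ‖Complex.exp (-Complex.I * (h : ℂ) * (lam : ℂ)) • γ h‖ ≤ ‖γ h‖ := by
    rw [norm_smul, norm_exp_neg_I_mul_intCast_mul_ofReal, one_mul]
  rw [funext₂ (meanPeriodogram_eq_smul_inv_smul γ)]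
  exact (uniformContinuous_const_smul (1 / (2 * Real.pi) : ℂ)).comp_tendstoUniformly
    (tendstoUniformly_inv_smul_sum_sum_sub hsum norm_term_le)

end Spectral

/-- uniform asymptotic unbiasedness of the mean of the periodogram:
the Cesàro mean `(2πn)⁻¹ ∑_{s,t=1}^n γ(s-t) e^{-i(s-t)λ}` converges to the spectral
density `f(λ) = (2π)⁻¹ ∑_{h∈ℤ} γ(h) e^{-ihλ}` uniformly in `λ`. -/
theorem statement9 (γ : ℤ → ℝ) (heven : ∀ h : ℤ, γ (-h) = γ h)
    (hsum : Summable fun h : ℤ => |γ h|) :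
    Tendsto (fun n : ℕ => ⨆ lam : ℝ,
      ‖(1 / (2 * Real.pi * n) : ℂ) *
          ∑ s ∈ Finset.Icc (1 : ℤ) n, ∑ t ∈ Finset.Icc (1 : ℤ) n,
            (γ (s - t) : ℂ) * Complex.exp (-Complex.I * ((s - t : ℤ) : ℂ) * (lam : ℂ)) -
        (1 / (2 * Real.pi) : ℂ) *
          ∑' h : ℤ, (γ h : ℂ) * Complex.exp (-Complex.I * (h : ℂ) * (lam : ℂ))‖)
      atTop (nhds 0) := by
  simpa only [meanPeriodogram, spectralDensity, smul_eq_mul, mul_comm (Complex.exp _)] using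
    tendsto_iSup_norm_sub_of_tendstoUniformly
      (statement9_general (fun h ↦ (γ h : ℂ)) (by simpa using hsum))
end

section
/- Let μ_n denote the n-fold product of the standard normal distribution on ℝ^n. Then for every y > 1 and every n ≥ 1, μ_n({w ∈ ℝ^n : Σ_{i=1}^n w_i² ≥ n·y}) ≤ exp(−n·β₂) where β₂ := (y − 1 − log y)/2, and moreover β₂ > 0. -/
open MeasureTheory ProbabilityTheory

/-!
The square of an `N(0, v)` variable has moment generating function `t ↦ (1 - 2vt)^(-1/2)`, and by
independence the sum of `n` such squares has the `n`-th power of it. The exponent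
`-t * n * v * y - n / 2 * log (1 - 2vt)` of the resulting Chernoff bound is smallest where
`1 - 2vt = 1 / y`, and there it equals `-n * (y - 1 - log y) / 2`.
-/

section

open Real Finset
open scoped NNReal

-- For `1 ≤ 2 * v * t` the exponential moment is infinite and both sides are `0` by convention.
lemma mgf_sq_gaussianReal (v : ℝ≥0) (t : ℝ) :
    mgf (fun x ↦ x ^ 2) (gaussianReal 0 v) t = (√(1 - 2 * v * t))⁻¹ := by
  obtain rfl | hv := eq_or_ne v 0
  · simp [mgf]
  have tilted_density (x : ℝ) : gaussianPDFReal 0 v x * exp (t * x ^ 2) =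
      (√(2 * π * v))⁻¹ * exp (-((1 - 2 * v * t) / (2 * v)) * x ^ 2) := by
    rw [gaussianPDFReal, mul_assoc, ← exp_add]
    congr 2
    field
  calc mgf (fun x ↦ x ^ 2) (gaussianReal 0 v) t
      = ∫ x, gaussianPDFReal 0 v x * exp (t * x ^ 2) := by
        simp only [mgf, integral_gaussianReal_eq_integral_smul hv, smul_eq_mul]
    _ = (√(2 * π * v))⁻¹ * √(π / ((1 - 2 * v * t) / (2 * v))) := by
        simp_rw [tilted_density, integral_const_mul, integral_gaussian]
    _ = (√(2 * π * v))⁻¹ * (√(2 * π * v) * (√(1 - 2 * v * t))⁻¹) := by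
        rw [← sqrt_inv (1 - 2 * v * t), ← sqrt_mul (by positivity)]
        congr 2
        field
    _ = (√(1 - 2 * v * t))⁻¹ := inv_mul_cancel_left₀ (by positivity) _

variable {Ω ι : Type*} {mΩ : MeasurableSpace Ω} {P : Measure Ω} {X : ι → Ω → ℝ} {v : ℝ≥0}

lemma mgf_sum_sq_of_hasLaw_gaussianReal (h_indep : iIndepFun X P)
    (h_law : ∀ i, HasLaw (X i) (gaussianReal 0 v) P) (s : Finset ι) (t : ℝ) :
    mgf (fun ω ↦ ∑ i ∈ s, X i ω ^ 2) P t = (√(1 - 2 * v * t))⁻¹ ^ #s := by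
  have h_indep_sq : iIndepFun (fun i ω ↦ X i ω ^ 2) P :=
    h_indep.comp (fun _ x ↦ x ^ 2) fun _ ↦ by fun_prop
  have mgf_sq (i : ι) : mgf (fun ω ↦ X i ω ^ 2) P t = (√(1 - 2 * v * t))⁻¹ := by
    rw [← mgf_sq_gaussianReal]
    exact (h_law i).integral_comp (f := fun x ↦ exp (t * x ^ 2)) (by fun_prop)
  have h_meas (i : ι) : AEMeasurable (fun ω ↦ X i ω ^ 2) P := (h_law i).aemeasurable.pow_const 2
  rw [← prod_eq_pow_card fun i _ ↦ mgf_sq i, ← h_indep_sq.mgf_sum₀ h_meas s]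
  simp only [sum_fn]

lemma measureReal_le_sum_sq_le_exp_of_hasLaw_gaussianReal (h_indep : iIndepFun X P)
    (h_law : ∀ i, HasLaw (X i) (gaussianReal 0 v) P) (s : Finset ι) {t : ℝ} (ht : 0 ≤ t)
    (hvt : 2 * v * t < 1) (ε : ℝ) :
    P.real {ω | ε ≤ ∑ i ∈ s, X i ω ^ 2} ≤ exp (-t * ε - #s / 2 * log (1 - 2 * v * t)) := by
  have : IsProbabilityMeasure P := h_indep.isProbabilityMeasure
  have h_mgf := mgf_sum_sq_of_hasLaw_gaussianReal h_indep h_law s t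
  have h_cgf : cgf (fun ω ↦ ∑ i ∈ s, X i ω ^ 2) P t = -(#s / 2 * log (1 - 2 * v * t)) := by
    rw [cgf, h_mgf, log_pow, log_inv, log_sqrt (sub_pos.2 hvt).le]
    ring
  have h_int : Integrable (fun ω ↦ exp (t * ∑ i ∈ s, X i ω ^ 2)) P :=
    mgf_pos_iff.1 <| h_mgf ▸ pow_pos (inv_pos.2 <| sqrt_pos.2 <| sub_pos.2 hvt) _
  rw [sub_eq_add_neg, ← h_cgf]
  exact measure_ge_le_exp_cgf ε ht h_int

theorem statement15_general (h_indep : iIndepFun X P)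
    (h_law : ∀ i, HasLaw (X i) (gaussianReal 0 v) P) (hv : v ≠ 0) (s : Finset ι) {y : ℝ}
    (hy : 1 < y) :
    P {ω | #s * (v * y) ≤ ∑ i ∈ s, X i ω ^ 2} ≤
        ENNReal.ofReal (exp (-(#s * ((y - 1 - log y) / 2)))) ∧
      0 < (y - 1 - log y) / 2 := by
  have : IsProbabilityMeasure P := h_indep.isProbabilityMeasure
  have hy_pos : 0 < y := by positivity
  refine ⟨?_, half_pos (sub_pos.2 (log_lt_sub_one_of_pos hy_pos hy.ne'))⟩
  obtain ⟨t, ht_def⟩ : ∃ t : ℝ, t = (1 - y⁻¹) / (2 * v) := ⟨_, rfl⟩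
  have ht : 0 ≤ t :=
    ht_def ▸ div_nonneg (sub_nonneg.2 (inv_le_one_of_one_le₀ hy.le)) (by positivity)
  have hvt : 1 - 2 * v * t = y⁻¹ := by rw [ht_def]; field
  have h_exponent : -t * (#s * (v * y)) - #s / 2 * log (1 - 2 * v * t) =
      -(#s * ((y - 1 - log y) / 2)) := by
    rw [hvt, log_inv, ht_def]
    field
  rw [← ofReal_measureReal, ← h_exponent]
  exact ENNReal.ofReal_le_ofReal <| measureReal_le_sum_sq_le_exp_of_hasLaw_gaussianReal
    h_indep h_law s ht (sub_pos.1 (hvt ▸ inv_pos.2 hy_pos)) _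

end

/-- Chernoff-type upper-tail bound for the chi-squared distribution:
if `W` consists of `n` i.i.d. standard normals and `y > 1`, then
`P(∑ Wᵢ² ≥ n y) ≤ exp(-n β₂)` with `β₂ = (y - 1 - log y)/2 > 0`. -/
theorem statement15 (y : ℝ) (hy : 1 < y) (n : ℕ) (hn : 1 ≤ n) :
    (Measure.pi fun _ : Fin n => gaussianReal 0 1)
        {w : Fin n → ℝ | (n : ℝ) * y ≤ ∑ i, w i ^ 2} ≤
      ENNReal.ofReal (Real.exp (-(n * ((y - 1 - Real.log y) / 2)))) ∧
    0 < (y - 1 - Real.log y) / 2 := by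
  simpa using statement15_general (iIndepFun_pi fun _ ↦ aemeasurable_id)
    (fun i ↦ (measurePreserving_eval (fun _ : Fin n ↦ gaussianReal 0 1) i).hasLaw)
    one_ne_zero Finset.univ hy
end
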